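/- arXiv:2006.08518 — 2 statements merged into one kernel-verified Lean document; each statement's English description precedes it below -/
import Mathlib

section
/- Let A_k := k³, a_k := k³ − (k−1)³, γ_k := a_{k+1}/A_{k+1} = 1 − (k/(k+1))³, and let {x_k}, {v_k} be Contracting-Domain Newton iterates: x₀ ∈ dom ψ, v_{k+1} ∈ dom ψ satisfies ⟨∇f(x_k) + ∇²f(x_k)(x_{k+1} − x_k), x − v_{k+1}⟩ + ψ(x) ≥ ψ(v_{k+1}) for all x ∈ dom ψ, and x_{k+1} := x_k + γ_k(v_{k+1} − x_k). Then for every k ≥ 1, F(x_k) − F* ≤ ℓ_k := F(x_k) − φ_k*/A_k, and ℓ_k ≤ (3^{2+ν} H_ν D^{2+ν} / ((1+ν) k³)) · Σ_{i=1}^k i^{1−ν}; in particular ℓ_k = O(H_ν D^{2+ν} / k^{1+ν}). -/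
/-!
The estimating functions satisfy `A_k F(x_k) - B_k ≤ φ_k` on `s = dom ψ`, where
`B_k = 3^(2+ν) H_ν D^(2+ν) / (1+ν) * ∑_{i ≤ k} i^(1-ν)`. This goes by induction on `k`. Passing from
`k` to `k + 1`, the gradient inequality for `f` between `x_{k+1}` and `x_k`, together with
`A_{k+1} x_{k+1} = A_k x_k + a_{k+1} v_{k+1}`, leaves the term
`a_{k+1} (⟨∇f(x_{k+1}), y - v_{k+1}⟩ + ψ(y))`. Stationarity of `v_{k+1}` bounds it below by
`a_{k+1} ψ(v_{k+1})`, up to the error made when `∇f(x_{k+1})` is replaced by its linearization at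
`x_k`. Hölder continuity of the Hessian bounds this error by
`H_ν / (1+ν) ‖x_{k+1} - x_k‖^(1+ν) D ≤ H_ν / (1+ν) γ_k^(1+ν) D^(2+ν)`
(`norm_grad_sub_linearization_le`), and `a_{k+1} γ_k^(1+ν) ≤ 3^(2+ν) (k+1)^(1-ν)`
(`weight_mul_rpow_le`). Convexity of `ψ` closes the induction.

The certificate bound `F(x_k) - F* ≤ ℓ_k` holds because `φ_k ≤ A_k F` on `s`, again by the gradient
inequality, and the rate follows from `∑_{i ≤ k} i^(1-ν) ≤ k^(2-ν)`.
-/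

/-- The gradient inequality for a convex function differentiable at a point of its domain. -/
theorem grad_ineq {E : Type*} [NormedAddCommGroup E] [NormedSpace ℝ E]
    {s : Set E} {f : E → ℝ} {f' : E →L[ℝ] ℝ} (hf : ConvexOn ℝ s f) {x y : E}
    (hx : x ∈ s) (hy : y ∈ s) (hd : HasFDerivAt f f' x) :
    f x + f' (y - x) ≤ f y := by
  have h1 := hf.comp_affineMap (AffineMap.lineMap x y : ℝ →ᵃ[ℝ] E)
  have h2 : HasDerivAt (f ∘ (AffineMap.lineMap x y : ℝ →ᵃ[ℝ] E)) (f' (y - x)) 0 := by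
    apply HasFDerivAt.comp_hasDerivAt (0 : ℝ) _ AffineMap.hasDerivAt_lineMap
    simpa using hd
  have h3 := h1.le_slope_of_hasDerivWithinAt (x := 0) (y := 1) (by simpa using hx)
    (by simpa using hy) one_pos h2.hasDerivWithinAt
  simp only [slope_def_field, Function.comp_apply, AffineMap.lineMap_apply_one,
    AffineMap.lineMap_apply_zero, sub_zero, div_one] at h3
  linarith

/-- A `ν`-Hölder second derivative makes the first-order Taylor remainder of the gradient
`O(‖y - x‖ ^ (1 + ν))`. -/
theorem norm_grad_sub_linearization_le {E : Type*} [NormedAddCommGroup E] [NormedSpace ℝ E]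
    {s : Set E} (hs : Convex ℝ s) {f' : E → E →L[ℝ] ℝ} {f'' : E → E →L[ℝ] E →L[ℝ] ℝ}
    (hder2 : ∀ x ∈ s, HasFDerivAt f' (f'' x) x)
    {ν Hν : ℝ} (hν : 0 ≤ ν)
    (hHolder : ∀ x ∈ s, ∀ y ∈ s, ‖f'' x - f'' y‖ ≤ Hν * ‖x - y‖ ^ ν)
    {x y : E} (hx : x ∈ s) (hy : y ∈ s) :
    ‖f' y - f' x - f'' x (y - x)‖ ≤ Hν / (1 + ν) * ‖y - x‖ ^ (1 + ν) := by
  have hseg : ∀ t ∈ Set.Icc (0 : ℝ) 1, x + t • (y - x) ∈ s := fun t ht =>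
    hs.add_smul_sub_mem hx hy ht
  have hg : ∀ t ∈ Set.Icc (0 : ℝ) 1,
      HasDerivAt (fun t : ℝ => f' (x + t • (y - x)) - f' x - t • f'' x (y - x))
        ((f'' (x + t • (y - x)) - f'' x) (y - x)) t := by
    intro t ht
    have h1 : HasDerivAt (fun t : ℝ => x + t • (y - x)) (y - x) t := by
      simpa using ((hasDerivAt_id t).smul_const (y - x)).const_add x
    have h2 := (hder2 _ (hseg t ht)).comp_hasDerivAt t h1
    have h3 : HasDerivAt (fun t : ℝ => t • f'' x (y - x)) (f'' x (y - x)) t := by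
      simpa using (hasDerivAt_id t).smul_const (f'' x (y - x))
    exact (h2.sub_const (f' x)).sub h3
  have hB : ∀ t : ℝ, HasDerivAt
      (fun t : ℝ => Hν / (1 + ν) * ‖y - x‖ ^ (1 + ν) * t ^ (1 + ν))
      (Hν * ‖y - x‖ ^ (1 + ν) * t ^ ν) t := by
    intro t
    have h := (Real.hasDerivAt_rpow_const (x := t) (p := 1 + ν) (Or.inr (by linarith))).const_mul
      (Hν / (1 + ν) * ‖y - x‖ ^ (1 + ν))
    have h0 : 1 + ν ≠ 0 := by linarith
    have e : Hν / (1 + ν) * ‖y - x‖ ^ (1 + ν) * ((1 + ν) * t ^ (1 + ν - 1))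
        = Hν * ‖y - x‖ ^ (1 + ν) * t ^ ν := by
      rw [add_sub_cancel_left]
      field_simp
    rwa [e] at h
  have key := image_norm_le_of_norm_deriv_right_le_deriv_boundary
    (fun t ht => (hg t ht).continuousAt.continuousWithinAt)
    (fun t ht => (hg t ⟨ht.1, ht.2.le⟩).hasDerivWithinAt)
    (B := fun t : ℝ => Hν / (1 + ν) * ‖y - x‖ ^ (1 + ν) * t ^ (1 + ν)) (by
      have : (0 : ℝ) ^ (1 + ν) = 0 := Real.zero_rpow (by linarith)
      simp [this]) hB (by
      intro t ht
      have h := hHolder _ (hseg t ⟨ht.1, ht.2.le⟩) x hx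
      rw [add_sub_cancel_left, norm_smul, Real.norm_of_nonneg ht.1,
        Real.mul_rpow ht.1 (norm_nonneg _)] at h
      calc _ ≤ ‖f'' (x + t • (y - x)) - f'' x‖ * ‖y - x‖ := ContinuousLinearMap.le_opNorm _ _
        _ ≤ Hν * (t ^ ν * ‖y - x‖ ^ ν) * ‖y - x‖ := by gcongr
        _ = _ := by
          rw [Real.rpow_one_add' (norm_nonneg _) (by linarith)]; ring)
    (Set.right_mem_Icc.2 zero_le_one)
  simpa using key

/-- The per-step error weight: with `a = n³ - (n-1)³ ≤ 3n²` and `γ = a / n³ ≤ 3 / n`, one has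
`a γ^(1+ν) ≤ 3^(2+ν) n^(1-ν)`. -/
theorem weight_mul_rpow_le {n ν : ℝ} (hn : 1 ≤ n) (hν : 0 ≤ ν) :
    (n ^ 3 - (n - 1) ^ 3) * ((n ^ 3 - (n - 1) ^ 3) / n ^ 3) ^ (1 + ν)
      ≤ 3 ^ (2 + ν) * n ^ (1 - ν) := by
  have hn0 : 0 < n := by linarith
  have h0 : 0 ≤ n ^ 3 - (n - 1) ^ 3 := by nlinarith
  have h1 : n ^ 3 - (n - 1) ^ 3 ≤ 3 * n ^ 2 := by nlinarith
  have h2 : (n ^ 3 - (n - 1) ^ 3) / n ^ 3 ≤ 3 / n := by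
    rw [div_le_div_iff₀ (by positivity) hn0]
    nlinarith
  calc _ ≤ 3 * n ^ 2 * (3 / n) ^ (1 + ν) := by gcongr
    _ = _ := by
      rw [Real.div_rpow (by norm_num) hn0.le, show (2 : ℝ) + ν = 1 + (1 + ν) by ring,
        Real.rpow_add (by norm_num) 1 (1 + ν), Real.rpow_one,
        show (1 : ℝ) - ν = 2 - (1 + ν) by ring, Real.rpow_sub hn0, Real.rpow_two]
      ring

theorem sum_weights (k : ℕ) :
    ∑ i ∈ Finset.Icc 1 k, ((i : ℝ) ^ 3 - ((i : ℝ) - 1) ^ 3) = (k : ℝ) ^ 3 := by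
  induction k with
  | zero => simp
  | succ k ih =>
    rw [Finset.sum_Icc_succ_top (by omega), ih]
    push_cast
    ring

theorem sum_rpow_le {ν : ℝ} (hν : ν ≤ 1) {k : ℕ} (hk : 1 ≤ k) :
    ∑ i ∈ Finset.Icc 1 k, (i : ℝ) ^ (1 - ν) ≤ (k : ℝ) ^ (2 - ν) := by
  have hk0 : (0 : ℝ) < k := by exact_mod_cast hk
  calc _ ≤ ∑ i ∈ Finset.Icc 1 k, (k : ℝ) ^ (1 - ν) := by
        refine Finset.sum_le_sum fun i hi => ?_
        have : (i : ℝ) ≤ k := by exact_mod_cast (Finset.mem_Icc.1 hi).2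
        exact Real.rpow_le_rpow (by positivity) this (by linarith)
    _ = _ := by
      rw [Finset.sum_const, Nat.card_Icc, nsmul_eq_mul, show (2 : ℝ) - ν = 1 + (1 - ν) by ring,
        Real.rpow_add hk0, Real.rpow_one]
      simp

/-- Theorem 1: `O(1/k^{1+ν})` rate of the Contracting-Domain
Newton Method I. `E` models `ℝⁿ` with an arbitrary norm; the gradient and
Hessian of `f` are the functional `f' x` and the bilinear form `f'' x`.
`s = dom ψ` has diameter bounded by `D`, `F = f + ψ`, `F* = min_{x ∈ dom ψ} F`,
`φ_k` are the linear estimating functions, `φ_k* = min_{x ∈ dom ψ} φ_k`,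
`A_k = k³`, `a_k = k³ − (k−1)³`, `γ_k = a_{k+1}/A_{k+1} = 1 − (k/(k+1))³`, and
the iterates obey the stationarity condition and the update rule. The
conclusion contains the accuracy-certificate bound, the explicit estimate from
the proof, and the `O(H_ν D^{2+ν}/k^{1+ν})` bound. -/
theorem stmt_6 {E : Type*} [NormedAddCommGroup E] [NormedSpace ℝ E]
    (s : Set E) (hs : Convex ℝ s) (ψ : E → ℝ) (hψ : ConvexOn ℝ s ψ)
    (D : ℝ) (hD : ∀ x ∈ s, ∀ y ∈ s, ‖x - y‖ ≤ D)
    (f : E → ℝ) (f' : E → E →L[ℝ] ℝ) (f'' : E → E →L[ℝ] E →L[ℝ] ℝ)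
    (hconv : ConvexOn ℝ s f)
    (hder1 : ∀ x ∈ s, HasFDerivAt f (f' x) x)
    (hder2 : ∀ x ∈ s, HasFDerivAt f' (f'' x) x)
    (hcont : ContinuousOn f'' s)
    (ν Hν : ℝ) (hν : ν ∈ Set.Icc (0 : ℝ) 1) (hH : 0 ≤ Hν)
    (hHolder : ∀ x ∈ s, ∀ y ∈ s, ‖f'' x - f'' y‖ ≤ Hν * ‖x - y‖ ^ ν)
    (a : ℕ → ℝ) (ha : ∀ k, a k = (k : ℝ) ^ 3 - ((k : ℝ) - 1) ^ 3)
    (A : ℕ → ℝ) (hA : ∀ k, A k = (k : ℝ) ^ 3)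
    (γ : ℕ → ℝ) (hγ : ∀ k, γ k = a (k + 1) / A (k + 1))
    (hγ' : ∀ k, γ k = 1 - ((k : ℝ) / ((k : ℝ) + 1)) ^ 3)
    (x v : ℕ → E) (hx0 : x 0 ∈ s) (hv : ∀ k, v (k + 1) ∈ s)
    (hstat : ∀ k, ∀ y ∈ s,
      f' (x k) (y - v (k + 1)) + f'' (x k) (x (k + 1) - x k) (y - v (k + 1)) + ψ y
        ≥ ψ (v (k + 1)))
    (hupd : ∀ k, x (k + 1) = x k + γ k • (v (k + 1) - x k))
    (F : E → ℝ) (hF : ∀ y, F y = f y + ψ y)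
    (Fstar : ℝ) (hFstar : Fstar = sInf (F '' s))
    (φ : ℕ → E → ℝ)
    (hφ : ∀ k y, φ k y = ∑ i ∈ Finset.Icc 1 k, a i * (f (x i) + f' (x i) (y - x i) + ψ y))
    (ℓ : ℕ → ℝ) (hℓ : ∀ k, ℓ k = F (x k) - sInf (φ k '' s) / A k) :
    (∀ k, 1 ≤ k →
      F (x k) - Fstar ≤ ℓ k ∧
      ℓ k ≤ (3 : ℝ) ^ (2 + ν) * Hν * D ^ (2 + ν) / ((1 + ν) * (k : ℝ) ^ 3)
              * ∑ i ∈ Finset.Icc 1 k, (i : ℝ) ^ (1 - ν)) ∧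
    ∃ C : ℝ, 0 < C ∧ ∀ k, 1 ≤ k →
      ℓ k ≤ C * Hν * D ^ (2 + ν) / (k : ℝ) ^ (1 + ν) := by
  obtain ⟨hν0, hν1⟩ := hν
  have hν2 : 0 < 1 + ν := by linarith
  have hD0 : 0 ≤ D := (norm_nonneg _).trans (hD _ hx0 _ hx0)
  have hγ0 : ∀ k, 0 ≤ γ k := by
    intro k
    rw [hγ', sub_nonneg]
    exact pow_le_one₀ (by positivity) ((div_le_one (by positivity)).2 (by linarith))
  have hγ1 : ∀ k, γ k ≤ 1 := by
    intro k
    rw [hγ']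
    have : (0 : ℝ) ≤ ((k : ℝ) / ((k : ℝ) + 1)) ^ 3 := by positivity
    linarith
  have hxs : ∀ k, x k ∈ s := by
    intro k
    induction k with
    | zero => exact hx0
    | succ k ih =>
      rw [hupd]
      exact hs.add_smul_sub_mem ih (hv k) ⟨hγ0 k, hγ1 k⟩
  have ha0 : ∀ k, 1 ≤ k → 0 ≤ a k := by
    intro k hk
    have : (1 : ℝ) ≤ k := by exact_mod_cast hk
    rw [ha]
    nlinarith
  set c : ℝ := 3 ^ (2 + ν) * Hν * D ^ (2 + ν) / (1 + ν) with hc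
  have hc0 : 0 ≤ c := by positivity
  -- Replacing the gradient at `x (k + 1)` by its linearization at `x k` in the stationarity condition.
  have herr : ∀ k, ∀ y ∈ s, ψ (v (k + 1)) - Hν / (1 + ν) * γ k ^ (1 + ν) * D ^ (2 + ν)
      ≤ f' (x (k + 1)) (y - v (k + 1)) + ψ y := by
    intro k y hy
    have h1 := norm_grad_sub_linearization_le hs hder2 hν0 hHolder (hxs k) (hxs (k + 1))
    have h2 : ‖x (k + 1) - x k‖ ≤ γ k * D := by
      rw [hupd, add_sub_cancel_left, norm_smul, Real.norm_of_nonneg (hγ0 k)]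
      exact mul_le_mul_of_nonneg_left (hD _ (hv k) _ (hxs k)) (hγ0 k)
    have h3 : ‖f' (x (k + 1)) - f' (x k) - f'' (x k) (x (k + 1) - x k)‖ * ‖y - v (k + 1)‖
        ≤ Hν / (1 + ν) * γ k ^ (1 + ν) * D ^ (2 + ν) := by
      calc _ ≤ (Hν / (1 + ν) * (γ k * D) ^ (1 + ν)) * D := by
            have := hγ0 k
            refine mul_le_mul (h1.trans ?_) (hD _ hy _ (hv k)) (norm_nonneg _) (by positivity)
            gcongr
        _ = _ := by
          rw [Real.mul_rpow (hγ0 k) hD0, show (2 : ℝ) + ν = 1 + (1 + ν) by ring,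
            Real.rpow_one_add' hD0 (y := 1 + ν) (by linarith)]
          ring
    have h4 := (abs_le.1 ((f' (x (k + 1)) - f' (x k)
      - f'' (x k) (x (k + 1) - x k)).le_opNorm (y - v (k + 1)))).1
    simp only [sub_apply] at h4
    have h5 := hstat k y hy
    linarith
  have hmain : ∀ k, ∀ y ∈ s,
      A k * F (x k) - c * ∑ i ∈ Finset.Icc 1 k, (i : ℝ) ^ (1 - ν) ≤ φ k y := by
    intro k
    induction k with
    | zero => intro y hy; simp [hA, hφ]
    | succ k ih =>
      intro y hy
      have hk1 : (1 : ℝ) ≤ ((k + 1 : ℕ) : ℝ) := by exact_mod_cast Nat.succ_pos k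
      have hA0 : 0 ≤ A k := by rw [hA]; positivity
      have hA1 : 0 < A (k + 1) := by rw [hA]; positivity
      have haA : A (k + 1) = A k + a (k + 1) := by
        rw [hA, hA, ha]; push_cast; ring
      have hgA : A (k + 1) * γ k = a (k + 1) := by
        rw [hγ]; field_simp
      have hak := ha0 (k + 1) (by omega)
      have hw : a (k + 1) * γ k ^ (1 + ν) ≤ 3 ^ (2 + ν) * ((k + 1 : ℕ) : ℝ) ^ (1 - ν) := by
        rw [hγ, hA, ha]
        exact weight_mul_rpow_le hk1 hν0
      have hw' : a (k + 1) * (Hν / (1 + ν) * γ k ^ (1 + ν) * D ^ (2 + ν))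
          ≤ c * ((k + 1 : ℕ) : ℝ) ^ (1 - ν) := by
        calc _ = (Hν / (1 + ν) * D ^ (2 + ν)) * (a (k + 1) * γ k ^ (1 + ν)) := by ring
          _ ≤ (Hν / (1 + ν) * D ^ (2 + ν)) * (3 ^ (2 + ν) * ((k + 1 : ℕ) : ℝ) ^ (1 - ν)) := by
            gcongr
          _ = _ := by rw [hc]; ring
      have hgrad := mul_le_mul_of_nonneg_left
        (grad_ineq hconv (hxs (k + 1)) (hxs k) (hder1 _ (hxs (k + 1)))) hA0
      have he := mul_le_mul_of_nonneg_left (herr k y hy) hak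
      have hpsi : A (k + 1) * ψ (x (k + 1)) ≤ A k * ψ (x k) + a (k + 1) * ψ (v (k + 1)) := by
        have h := hψ.2 (hxs k) (hv k) (sub_nonneg.2 (hγ1 k)) (hγ0 k) (by ring)
        have hx : (1 - γ k) • x k + γ k • v (k + 1) = x (k + 1) := by
          rw [hupd]; module
        rw [hx, smul_eq_mul, smul_eq_mul] at h
        have h' := mul_le_mul_of_nonneg_left h hA1.le
        calc _ ≤ _ := h'
          _ = (A (k + 1) - A (k + 1) * γ k) * ψ (x k)
              + (A (k + 1) * γ k) * ψ (v (k + 1)) := by ring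
          _ = _ := by rw [hgA, haA]; ring
      -- `A (k + 1) x (k + 1) = A k x k + a (k + 1) v (k + 1)`, seen through the gradient.
      have hlin : A k * f' (x (k + 1)) (x k - x (k + 1))
          + a (k + 1) * f' (x (k + 1)) (y - x (k + 1))
          = a (k + 1) * f' (x (k + 1)) (y - v (k + 1)) := by
        have hz : A k • (x k - x (k + 1)) + a (k + 1) • (y - x (k + 1))
            = a (k + 1) • (y - v (k + 1)) := by
          have h1 : A (k + 1) • x (k + 1)
              = A (k + 1) • x k + a (k + 1) • (v (k + 1) - x k) := by
            rw [← hgA, mul_smul, ← smul_add, ← hupd]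
          have h2 : A k • (x k - x (k + 1)) + a (k + 1) • (y - x (k + 1))
              = A k • x k + a (k + 1) • y - A (k + 1) • x (k + 1) := by
            rw [haA]; module
          rw [h2, h1, haA]; module
        simpa using congrArg (f' (x (k + 1))) hz
      have hih := ih y hy
      rw [hφ, Finset.sum_Icc_succ_top (by omega), Finset.sum_Icc_succ_top (by omega), ← hφ]
      rw [hF] at hih ⊢
      have e : A (k + 1) * f (x (k + 1)) = A k * f (x (k + 1)) + a (k + 1) * f (x (k + 1)) := by
        rw [haA]; ring
      linarith
  have hupper : ∀ k, ∀ y ∈ s, φ k y ≤ A k * F y := by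
    intro k y hy
    rw [hφ, hA, ← sum_weights, Finset.sum_mul]
    refine Finset.sum_le_sum fun i hi => ?_
    rw [← ha]
    refine mul_le_mul_of_nonneg_left ?_ (ha0 i (Finset.mem_Icc.1 hi).1)
    have := grad_ineq hconv (hxs i) hy (hder1 _ (hxs i))
    rw [hF]
    linarith
  have hbdd : ∀ k, BddBelow (φ k '' s) := fun k =>
    ⟨_, Set.forall_mem_image.2 (hmain k)⟩
  have hrate : ∀ k, 1 ≤ k → ℓ k ≤ (3 : ℝ) ^ (2 + ν) * Hν * D ^ (2 + ν) / ((1 + ν) * (k : ℝ) ^ 3)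
      * ∑ i ∈ Finset.Icc 1 k, (i : ℝ) ^ (1 - ν) := by
    intro k hk
    have hk0 : (0 : ℝ) < k := by exact_mod_cast hk
    have hAk : 0 < A k := by rw [hA]; positivity
    have h := le_csInf (Set.Nonempty.image (φ k) ⟨x 0, hx0⟩) (Set.forall_mem_image.2 (hmain k))
    have e : (3 : ℝ) ^ (2 + ν) * Hν * D ^ (2 + ν) / ((1 + ν) * (k : ℝ) ^ 3)
        * ∑ i ∈ Finset.Icc 1 k, (i : ℝ) ^ (1 - ν)
        = (c * ∑ i ∈ Finset.Icc 1 k, (i : ℝ) ^ (1 - ν)) / A k := by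
      rw [hA, hc]
      field_simp
    rw [e, hℓ, sub_le_iff_le_add, ← add_div, le_div_iff₀ hAk]
    linarith
  refine ⟨fun k hk => ⟨?_, hrate k hk⟩, 3 ^ (2 + ν) / (1 + ν), by positivity, fun k hk => ?_⟩
  · have hk0 : (0 : ℝ) < k := by exact_mod_cast hk
    have hAk : 0 < A k := by rw [hA]; positivity
    rw [hℓ, hFstar]
    refine sub_le_sub_left (le_csInf (Set.Nonempty.image F ⟨x 0, hx0⟩)
      (Set.forall_mem_image.2 fun y hy => ?_)) _
    rw [div_le_iff₀ hAk, mul_comm]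
    exact (csInf_le (hbdd k) ⟨y, hy, rfl⟩).trans (hupper k y hy)
  · have hk0 : (0 : ℝ) < k := by exact_mod_cast hk
    calc ℓ k ≤ _ := hrate k hk
      _ ≤ (3 : ℝ) ^ (2 + ν) * Hν * D ^ (2 + ν) / ((1 + ν) * (k : ℝ) ^ 3) * (k : ℝ) ^ (2 - ν) := by
        gcongr
        exact sum_rpow_le hν1 hk
      _ = _ := by
        have : (k : ℝ) ^ (2 - ν) = (k : ℝ) ^ 3 / (k : ℝ) ^ (1 + ν) := by
          rw [show (2 : ℝ) - ν = (3 : ℕ) - (1 + ν) by push_cast; ring, Real.rpow_sub hk0,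
            Real.rpow_natCast]
        rw [this]
        field_simp
end

section
/- Assume in addition that ψ is μ-strongly convex with μ > 0, and define the condition number ω_ν := [H_ν D^ν / ((1+ν) μ)]^{1/(1+ν)}. Let A₀ := 0, A_k := (1 + ω_ν^{−1})^k for k ≥ 1, a_k := A_k − A_{k−1}, γ₀ := 1, γ_k := 1/(1 + ω_ν) for k ≥ 1, and let {x_k}, {v_k} be Contracting-Domain Newton iterates: x₀ ∈ dom ψ, v_{k+1} ∈ dom ψ satisfies ⟨∇f(x_k) + ∇²f(x_k)(x_{k+1} − x_k), x − v_{k+1}⟩ + ψ(x) ≥ ψ(v_{k+1}) + (μ/2)‖x − v_{k+1}‖² for all x ∈ dom ψ, and x_{k+1} := x_k + γ_k(v_{k+1} − x_k). Then for every k ≥ 1, F(x_k) − F* ≤ ℓ_k := F(x_k) − φ_k*/A_k ≤ exp(−(k−1)/(1 + ω_ν)) · H_ν D^{2+ν}/(1+ν). -/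
/-!
The method is analysed through an estimating-sequence invariant: for every `k ≥ 1` and `y ∈ s`,
`φ_k(y) ≥ A_k F(x_k) - A_1 C` with `C = H_ν D^{2+ν} / (1+ν)`. Dividing by `A_k` gives
`ℓ_k ≤ C A_1 / A_k = C (1 + ω⁻¹)^{-(k-1)}`, and `(1 + ω⁻¹)^{-1} = 1 - 1/(1+ω) ≤ exp(-1/(1+ω))`.
The bound `F(x_k) - F* ≤ ℓ_k` is convexity of `f`, since `A_k = a_1 + ⋯ + a_k`.

For the first iterate the invariant follows from the stationarity condition, the Taylor bound
`norm_taylor_le` for the gradient, and the diameter bound. In the step from `k` to `k+1`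
(`estimate_step`) the Taylor error costs at most `a_{k+1} μ q R r`, where `q = ω/(1+ω)`,
`R = ‖v_{k+1} - x_k‖` and `r = ‖y - v_{k+1}‖`; this is `condition_bound`. Strong convexity of `ψ`, used both in the
stationarity condition and along the segment from `x_k` to `v_{k+1}`, contributes
`a_{k+1} (μ/2) (r² + q R²)`. As `0 ≤ q ≤ 1`, this is at least the cost, so the deficit `A_1 C` does not grow.
-/

/-- First-order Taylor bound for a map whose derivative is `ν`-Hölder. -/
lemma norm_taylor_le {E G : Type*} [NormedAddCommGroup E] [NormedSpace ℝ E]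
    [NormedAddCommGroup G] [NormedSpace ℝ G]
    {s : Set E} (hs : Convex ℝ s) {g : E → G} {g' : E → E →L[ℝ] G}
    (hder : ∀ x ∈ s, HasFDerivAt g (g' x) x) {ν H : ℝ} (hν : 0 ≤ ν)
    (hHolder : ∀ x ∈ s, ∀ y ∈ s, ‖g' x - g' y‖ ≤ H * ‖x - y‖ ^ ν)
    {x y : E} (hx : x ∈ s) (hy : y ∈ s) :
    ‖g y - g x - g' x (y - x)‖ ≤ H / (1 + ν) * ‖y - x‖ ^ (1 + ν) := by
  have hmem : ∀ t ∈ Set.Icc (0 : ℝ) 1, x + t • (y - x) ∈ s := fun t ht =>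
    hs.add_smul_sub_mem hx hy ht
  have hline : ∀ t : ℝ, HasDerivAt (fun t : ℝ => x + t • (y - x)) (y - x) t := fun t => by
    simpa using ((hasDerivAt_id t).smul_const (y - x)).const_add x
  have hd : ∀ t ∈ Set.Icc (0 : ℝ) 1,
      HasDerivAt (fun t : ℝ => g (x + t • (y - x)) - g x - t • g' x (y - x))
        (g' (x + t • (y - x)) (y - x) - g' x (y - x)) t := fun t ht => by
    have h1 := (hder _ (hmem t ht)).comp_hasDerivAt t (hline t)
    have h2 : HasDerivAt (fun t : ℝ => t • g' x (y - x)) (g' x (y - x)) t := by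
      simpa using (hasDerivAt_id t).smul_const (g' x (y - x))
    exact (h1.sub_const (g x)).sub h2
  have hB : ∀ t : ℝ, HasDerivAt
      (fun t : ℝ => H / (1 + ν) * ‖y - x‖ ^ (1 + ν) * t ^ (1 + ν))
      (H * ‖y - x‖ ^ (1 + ν) * t ^ ν) t := fun t => by
    have h := (Real.hasDerivAt_rpow_const (x := t) (p := 1 + ν) (Or.inr (by linarith))).const_mul
      (H / (1 + ν) * ‖y - x‖ ^ (1 + ν))
    have h0 : (1 + ν) ≠ 0 := by positivity
    have e : H / (1 + ν) * ‖y - x‖ ^ (1 + ν) * ((1 + ν) * t ^ (1 + ν - 1))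
        = H * ‖y - x‖ ^ (1 + ν) * t ^ ν := by
      rw [add_sub_cancel_left]
      field_simp
    rwa [e] at h
  have key := image_norm_le_of_norm_deriv_right_le_deriv_boundary (a := (0 : ℝ)) (b := 1)
    (fun t ht => (hd t ht).continuousAt.continuousWithinAt)
    (fun t ht => (hd t (Set.Ico_subset_Icc_self ht)).hasDerivWithinAt)
    (B := fun t : ℝ => H / (1 + ν) * ‖y - x‖ ^ (1 + ν) * t ^ (1 + ν))
    (B' := fun t => H * ‖y - x‖ ^ (1 + ν) * t ^ ν)
    (by simp [Real.zero_rpow (by positivity : (1 + ν) ≠ 0)]) hB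
    (fun t ht => by
      have h1 := hHolder _ (hmem t (Set.Ico_subset_Icc_self ht)) x hx
      rw [add_sub_cancel_left, norm_smul, Real.norm_of_nonneg ht.1,
        Real.mul_rpow ht.1 (norm_nonneg _)] at h1
      rw [← sub_apply]
      refine ((g' (x + t • (y - x)) - g' x).le_opNorm (y - x)).trans
        ((mul_le_mul_of_nonneg_right h1 (norm_nonneg _)).trans (le_of_eq ?_))
      rw [Real.rpow_add_of_nonneg (norm_nonneg _) zero_le_one hν, Real.rpow_one]
      ring)
    (Set.right_mem_Icc.2 zero_le_one)
  simpa using key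

/-- Gradient inequality for a convex function. -/
lemma ConvexOn.add_fderiv_le {E : Type*} [NormedAddCommGroup E] [NormedSpace ℝ E]
    {s : Set E} {f : E → ℝ} (hf : ConvexOn ℝ s f) {x y : E} {f' : E →L[ℝ] ℝ}
    (hder : HasFDerivAt f f' x) (hx : x ∈ s) (hy : y ∈ s) :
    f x + f' (y - x) ≤ f y := by
  have hline : HasDerivAt (fun t : ℝ => x + t • (y - x)) (y - x) 0 := by
    simpa using ((hasDerivAt_id (0 : ℝ)).smul_const (y - x)).const_add x
  have hd : HasDerivAt (fun t : ℝ => f (x + t • (y - x))) (f' (y - x)) 0 := by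
    have hder' : HasFDerivAt f f' (x + (0 : ℝ) • (y - x)) := by simpa using hder
    exact hder'.comp_hasDerivAt (0 : ℝ) hline
  have hc : ConvexOn ℝ (Set.Icc (0 : ℝ) 1) (fun t : ℝ => f (x + t • (y - x))) := by
    refine ⟨convex_Icc _ _, fun t ht u hu a b ha hb hab => ?_⟩
    have h := hf.2 (hf.1.add_smul_sub_mem hx hy ht) (hf.1.add_smul_sub_mem hx hy hu) ha hb hab
    have e : x + (a • t + b • u) • (y - x)
        = a • (x + t • (y - x)) + b • (x + u • (y - x)) := by
      obtain rfl : b = 1 - a := by linarith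
      simp only [smul_eq_mul]
      module
    simp only [e]
    exact h
  have h := hc.le_slope_of_hasDerivAt (x := 0) (y := 1) (by simp) (by simp) one_pos hd
  simp only [slope_def_field, one_smul, zero_smul, add_zero, sub_zero, div_one,
    add_sub_cancel] at h
  linarith

/-- One step of the method preserves a lower bound `P ≥ α F(x) - B` on the estimating function:
here `α`, `a`, `α + a` stand for `A_k`, `a_{k+1}`, `A_{k+1}`, `γ = a / (α + a)`, and `q = 1 - γ`.
The hypothesis `herr` is the Taylor bound with the condition number already inserted. -/
lemma estimate_step {E : Type*} [NormedAddCommGroup E] [NormedSpace ℝ E]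
    {s : Set E} {μ : ℝ} (hμ : 0 < μ) {ψ f : E → ℝ} (hψ : StrongConvexOn s μ ψ)
    (hconv : ConvexOn ℝ s f) {x V z y : E} (hx : x ∈ s) (hV : V ∈ s) (hz : z ∈ s)
    {α a γ B P : ℝ} (ha : 0 ≤ a) (hα : 0 ≤ α) (hγ0 : 0 ≤ γ) (hγ1 : γ ≤ 1)
    (haγ : a = (α + a) * γ)
    (hzdef : z = x + γ • (V - x)) {gx gz hz' : E →L[ℝ] ℝ}
    (hgz : HasFDerivAt f gz z)
    (hstat : gx (y - V) + hz' (y - V) + ψ y ≥ ψ V + μ / 2 * ‖y - V‖ ^ 2)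
    (herr : ‖gz - gx - hz'‖ ≤ μ * (1 - γ) * ‖V - x‖)
    (hP : α * (f x + ψ x) - B ≤ P) :
    (α + a) * (f z + ψ z) - B ≤ P + a * (f z + gz (y - z) + ψ y) := by
  have h1 := hconv.add_fderiv_le hgz hz hx
  have h2 := hψ.2 hx hV (sub_nonneg.2 hγ1) hγ0 (by ring)
  have e2 : (1 - γ) • x + γ • V = z := by rw [hzdef]; module
  rw [e2, norm_sub_rev] at h2
  simp only [smul_eq_mul] at h2
  have h3 : -(μ * (1 - γ) * ‖V - x‖ * ‖y - V‖) ≤ gz (y - V) - gx (y - V) - hz' (y - V) := by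
    have h := (gz - gx - hz').le_opNorm (y - V)
    rw [Real.norm_eq_abs] at h
    have h' := (neg_abs_le ((gz - gx - hz') (y - V)))
    have h4 := mul_le_mul_of_nonneg_right herr (norm_nonneg (y - V))
    simp only [sub_apply] at h h'
    linarith
  -- `α x + a V = (α + a) z` turns the two gradient terms at `z` into one.
  have h4 : α * gz (x - z) + a * gz (y - z) = a * gz (y - V) := by
    have e1 : x - z = -(γ • (V - x)) := by rw [hzdef]; module
    have e3 : y - z = (y - V) + (1 - γ) • (V - x) := by rw [hzdef]; module
    rw [e1, e3]
    simp only [map_neg, map_add, map_smul, smul_eq_mul]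
    linear_combination (gz (V - x)) * haγ
  set R := ‖V - x‖
  set r := ‖y - V‖
  have h5 : 0 ≤ r ^ 2 + (1 - γ) * R ^ 2 - 2 * ((1 - γ) * R * r) := by
    nlinarith [mul_nonneg (sub_nonneg.2 hγ1) (sq_nonneg (r - R)), mul_nonneg hγ0 (sq_nonneg r)]
  have h6 : a * ψ V + α * ψ x ≥ (α + a) * ψ z + a * ((1 - γ) * (μ / 2 * R ^ 2)) := by
    have := mul_le_mul_of_nonneg_left h2 (add_nonneg hα ha)
    have e4 : (α + a) * ((1 - γ) * ψ x + γ * ψ V - (1 - γ) * γ * (μ / 2 * R ^ 2))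
        = α * ψ x + a * ψ V - a * ((1 - γ) * (μ / 2 * R ^ 2)) := by
      linear_combination (ψ x - ψ V + (1 - γ) * (μ / 2 * R ^ 2)) * haγ
    linarith
  have h7 := mul_le_mul_of_nonneg_left h1 hα
  have h8 := mul_le_mul_of_nonneg_left hstat ha
  have h9 := mul_le_mul_of_nonneg_left h3 ha
  have h10 := mul_nonneg (mul_nonneg ha hμ.le) h5
  linarith

/-- Substituting the condition number into the Taylor error of a step of length `γ R`,
`γ = 1 / (1 + ω)`. The estimate uses `R ^ ν ≤ D ^ ν` and `q ^ (1 + ν) ≤ q` for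
`q = 1 - γ = ω / (1 + ω)`. -/
lemma condition_bound {ω ν H D μ R : ℝ} (hω0 : 0 < ω) (hν : 0 ≤ ν) (hH : 0 < H) (hμ : 0 < μ)
    (hR : 0 ≤ R) (hRD : R ≤ D)
    (hω : ω = (H * D ^ ν / ((1 + ν) * μ)) ^ (1 / (1 + ν))) :
    H / (1 + ν) * (1 / (1 + ω) * R) ^ (1 + ν) ≤ μ * (1 - 1 / (1 + ω)) * R := by
  have hD : 0 ≤ D := hR.trans hRD
  have hν1 : 0 < 1 + ν := by positivity
  have hpow : ω ^ (1 + ν) = H * D ^ ν / ((1 + ν) * μ) := by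
    rw [hω, ← Real.rpow_mul (by positivity), one_div_mul_cancel hν1.ne', Real.rpow_one]
  have hRν : R ^ ν ≤ D ^ ν := Real.rpow_le_rpow hR hRD hν
  have hq : (1 - 1 / (1 + ω)) = ω / (1 + ω) := by field_simp; ring
  have hq1 : (ω / (1 + ω)) ^ (1 + ν) ≤ ω / (1 + ω) := by
    have := Real.rpow_le_rpow_of_exponent_ge (x := ω / (1 + ω)) (by positivity)
      ((div_le_one (by positivity)).2 (by linarith)) (by linarith : (1 : ℝ) ≤ 1 + ν)
    simpa using this
  have e : H / (1 + ν) * D ^ ν = μ * ω ^ (1 + ν) := by rw [hpow]; field_simp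
  rw [hq, Real.mul_rpow (by positivity) hR, Real.rpow_add_of_nonneg hR zero_le_one hν,
    Real.rpow_one]
  calc H / (1 + ν) * ((1 / (1 + ω)) ^ (1 + ν) * (R * R ^ ν))
      ≤ H / (1 + ν) * ((1 / (1 + ω)) ^ (1 + ν) * (R * D ^ ν)) := by gcongr
    _ = (H / (1 + ν) * D ^ ν) * (1 / (1 + ω)) ^ (1 + ν) * R := by ring
    _ = μ * (ω / (1 + ω)) ^ (1 + ν) * R := by
        rw [e, mul_assoc μ, ← Real.mul_rpow hω0.le (by positivity), mul_one_div]
    _ ≤ _ := by gcongr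

/-- Theorem 2, second part: global linear rate of the
Contracting-Domain Newton Method I when the second-order condition number
`ω_ν = (H_ν D^ν / ((1+ν) μ))^{1/(1+ν)}` is known. Setup as in Statement 7,
with `A₀ = 0`, `A_k = (1 + ω_ν⁻¹)^k` for `k ≥ 1`, `a_k = A_k − A_{k−1}`,
`γ₀ = 1` and `γ_k = 1/(1 + ω_ν)` for `k ≥ 1`. -/
theorem stmt_8 {E : Type*} [NormedAddCommGroup E] [NormedSpace ℝ E]
    (s : Set E) (hs : Convex ℝ s)
    (μ : ℝ) (hμ : 0 < μ) (ψ : E → ℝ) (hψ : StrongConvexOn s μ ψ)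
    (D : ℝ) (hD : ∀ x ∈ s, ∀ y ∈ s, ‖x - y‖ ≤ D)
    (f : E → ℝ) (f' : E → E →L[ℝ] ℝ) (f'' : E → E →L[ℝ] E →L[ℝ] ℝ)
    (hconv : ConvexOn ℝ s f)
    (hder1 : ∀ x ∈ s, HasFDerivAt f (f' x) x)
    (hder2 : ∀ x ∈ s, HasFDerivAt f' (f'' x) x)
    (hcont : ContinuousOn f'' s)
    (ν Hν : ℝ) (hν : ν ∈ Set.Icc (0 : ℝ) 1) (hH : 0 < Hν)
    (hHolder : ∀ x ∈ s, ∀ y ∈ s, ‖f'' x - f'' y‖ ≤ Hν * ‖x - y‖ ^ ν)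
    (ω : ℝ) (hω : ω = (Hν * D ^ ν / ((1 + ν) * μ)) ^ (1 / (1 + ν)))
    (A : ℕ → ℝ) (hA0 : A 0 = 0) (hA : ∀ k, 1 ≤ k → A k = (1 + ω⁻¹) ^ k)
    (a : ℕ → ℝ) (ha : ∀ k, 1 ≤ k → a k = A k - A (k - 1))
    (γ : ℕ → ℝ) (hγ0 : γ 0 = 1) (hγ : ∀ k, 1 ≤ k → γ k = 1 / (1 + ω))
    (x v : ℕ → E) (hx0 : x 0 ∈ s) (hv : ∀ k, v (k + 1) ∈ s)
    (hstat : ∀ k, ∀ y ∈ s,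
      f' (x k) (y - v (k + 1)) + f'' (x k) (x (k + 1) - x k) (y - v (k + 1)) + ψ y
        ≥ ψ (v (k + 1)) + μ / 2 * ‖y - v (k + 1)‖ ^ 2)
    (hupd : ∀ k, x (k + 1) = x k + γ k • (v (k + 1) - x k))
    (F : E → ℝ) (hF : ∀ y, F y = f y + ψ y)
    (Fstar : ℝ) (hFstar : Fstar = sInf (F '' s))
    (φ : ℕ → E → ℝ)
    (hφ : ∀ k y, φ k y = ∑ i ∈ Finset.Icc 1 k, a i * (f (x i) + f' (x i) (y - x i) + ψ y))
    (ℓ : ℕ → ℝ) (hℓ : ∀ k, ℓ k = F (x k) - sInf (φ k '' s) / A k) :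
    ∀ k, 1 ≤ k →
      F (x k) - Fstar ≤ ℓ k ∧
      ℓ k ≤ Real.exp (-(((k : ℝ) - 1) / (1 + ω))) * (Hν * D ^ (2 + ν) / (1 + ν)) := by
  obtain ⟨hν0, -⟩ := hν
  have hν1 : 0 < 1 + ν := by positivity
  have hD0 : 0 ≤ D := (norm_nonneg _).trans (hD _ hx0 _ hx0)
  have hω0 : 0 ≤ ω := by rw [hω]; positivity
  have hγmem : ∀ k, γ k ∈ Set.Icc (0 : ℝ) 1 := fun k => by
    rcases Nat.eq_zero_or_pos k with rfl | hk
    · simp [hγ0]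
    · rw [hγ k hk]
      exact ⟨by positivity, (div_le_one (by positivity)).2 (by linarith)⟩
  have hxs : ∀ k, x k ∈ s := fun k => by
    induction k with
    | zero => exact hx0
    | succ k ih => rw [hupd]; exact hs.add_smul_sub_mem ih (hv k) (hγmem k)
  have hApos : ∀ k, 1 ≤ k → 0 < A k := fun k hk => by rw [hA k hk]; positivity
  have haS : ∀ k, 1 ≤ k → a (k + 1) = (1 + ω⁻¹) ^ k * ω⁻¹ := fun k hk => by
    rw [ha _ (by omega), hA _ (by omega), Nat.add_sub_cancel, hA k hk]; ring
  have ha1 : a 1 = A 1 := by simp [ha 1 le_rfl, hA0]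
  have ha0 : ∀ k, 1 ≤ k → 0 ≤ a k := fun k hk => by
    obtain rfl | ⟨m, hm, rfl⟩ : k = 1 ∨ ∃ m, 1 ≤ m ∧ k = m + 1 := by
      rcases Nat.lt_or_ge 1 k with h | h
      · exact Or.inr ⟨k - 1, by omega, by omega⟩
      · exact Or.inl (by omega)
    · rw [ha1]; exact (hApos 1 le_rfl).le
    · rw [haS m hm]; positivity
  have hsum : ∀ k, ∑ i ∈ Finset.Icc 1 k, a i = A k := fun k => by
    induction k with
    | zero => simp [hA0]
    | succ k ih =>
      rw [Finset.sum_Icc_succ_top (by omega), ih, ha _ (by omega), Nat.add_sub_cancel]; ring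
  have hφS : ∀ k y, φ (k + 1) y
      = φ k y + a (k + 1) * (f (x (k + 1)) + f' (x (k + 1)) (y - x (k + 1)) + ψ y) := fun k y => by
    rw [hφ, hφ, Finset.sum_Icc_succ_top (by omega)]
  -- If `ω = 0` then `D = 0`, so `s` is a single point.
  have hdeg : ω = 0 → D = 0 := fun h => by
    by_contra hne
    have : 0 < D := lt_of_le_of_ne hD0 (Ne.symm hne)
    have : 0 < ω := by rw [hω]; positivity
    exact this.ne' h
  set C := Hν * D ^ (2 + ν) / (1 + ν) with hC
  have hC0 : 0 ≤ C := by positivity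
  have herr : ∀ k, ‖f' (x (k + 1)) - f' (x k) - f'' (x k) (x (k + 1) - x k)‖
      ≤ Hν / (1 + ν) * (γ k * ‖v (k + 1) - x k‖) ^ (1 + ν) := fun k => by
    have h := norm_taylor_le hs hder2 hν0 hHolder (hxs k) (hxs (k + 1))
    have e : ‖x (k + 1) - x k‖ = γ k * ‖v (k + 1) - x k‖ := by
      rw [hupd k, add_sub_cancel_left, norm_smul, Real.norm_of_nonneg (hγmem k).1]
    rwa [← e]
  have hinv : ∀ k, 1 ≤ k → ∀ y ∈ s, A k * F (x k) - A 1 * C ≤ φ k y := by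
    intro k hk
    induction k, hk using Nat.le_induction with
    | base =>
      intro y hy
      have hx1 : x 1 = v 1 := by have := hupd 0; rw [hγ0] at this; simpa using this
      have h1 := hstat 0 y hy
      have h2 := herr 0
      simp only [zero_add, hγ0, one_mul] at h1 h2
      rw [← hx1] at h1 h2
      have h3 : Hν / (1 + ν) * ‖x 1 - x 0‖ ^ (1 + ν) ≤ Hν / (1 + ν) * D ^ (1 + ν) := by
        have := hD _ (hxs 1) _ (hxs 0)
        gcongr
      have h4 := (f' (x 1) - f' (x 0) - f'' (x 0) (x 1 - x 0)).le_opNorm (y - x 1)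
      have h5 : ‖f' (x 1) - f' (x 0) - f'' (x 0) (x 1 - x 0)‖ * ‖y - x 1‖ ≤ C := by
        have := mul_le_mul (h2.trans h3) (hD _ hy _ (hxs 1)) (norm_nonneg _) (by positivity)
        refine this.trans (le_of_eq ?_)
        rw [hC, show 2 + ν = (1 + ν) + 1 by ring,
          Real.rpow_add_of_nonneg hD0 hν1.le zero_le_one, Real.rpow_one]
        ring
      rw [Real.norm_eq_abs] at h4
      have h6 := neg_abs_le ((f' (x 1) - f' (x 0) - f'' (x 0) (x 1 - x 0)) (y - x 1))
      simp only [sub_apply] at h4 h6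
      have h7 : 0 ≤ μ / 2 * ‖y - x 1‖ ^ 2 := by positivity
      rw [hφ, Finset.Icc_self, Finset.sum_singleton, ha1, hF, ← mul_sub]
      exact mul_le_mul_of_nonneg_left (by linarith) (hApos 1 le_rfl).le
    | succ k hk ih =>
      intro y hy
      have hAS : A (k + 1) = A k + a (k + 1) := by rw [ha _ (by omega), Nat.add_sub_cancel]; ring
      rw [hφS, hAS, hF]
      have hP := ih y hy
      rw [hF] at hP
      rcases hω0.eq_or_lt with h0 | hpos
      -- Here `a_{k+1} = 0` and the iterates coincide, so nothing changes.
      · have hDz := hdeg h0.symm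
        have hxx : x (k + 1) = x k := by
          have := hD _ (hxs (k + 1)) _ (hxs k)
          rw [hDz] at this
          exact sub_eq_zero.1 (norm_le_zero_iff.1 this)
        have haz : a (k + 1) = 0 := by rw [haS k hk, ← h0]; simp
        rw [haz, hxx]
        simpa using hP
      · refine estimate_step hμ hψ hconv (hxs k) (hv k) (hxs (k + 1)) (ha0 _ (by omega))
          (hApos k hk).le (hγmem k).1 (hγmem k).2 ?_ (hupd k) (hder1 _ (hxs _))
          (hstat k y hy) ?_ hP
        · rw [← hAS, haS k hk, hA _ (by omega), hγ k hk, pow_succ]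
          field_simp
          ring
        · refine (herr k).trans ?_
          rw [hγ k hk]
          exact condition_bound hpos hν0 hH hμ (norm_nonneg _) (hD _ (hv k) _ (hxs k)) hω
  intro k hk
  have hAk := hApos k hk
  have hne : (φ k '' s).Nonempty := ⟨_, _, hx0, rfl⟩
  have hlow : ∀ b ∈ φ k '' s, A k * F (x k) - A 1 * C ≤ b := by
    rintro _ ⟨y, hy, rfl⟩; exact hinv k hk y hy
  have hbdd : BddBelow (φ k '' s) := ⟨_, hlow⟩
  have hupper : ∀ y ∈ s, φ k y ≤ A k * F y := fun y hy => by
    rw [hφ, ← hsum, Finset.sum_mul]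
    refine Finset.sum_le_sum fun i hi => ?_
    refine mul_le_mul_of_nonneg_left ?_ (ha0 i (Finset.mem_Icc.1 hi).1)
    rw [hF]
    linarith [hconv.add_fderiv_le (hder1 _ (hxs i)) (hxs i) hy]
  rw [hℓ]
  constructor
  · have : sInf (φ k '' s) / A k ≤ Fstar := by
      rw [hFstar]
      refine le_csInf ⟨_, _, hx0, rfl⟩ ?_
      rintro _ ⟨y, hy, rfl⟩
      rw [div_le_iff₀ hAk, mul_comm]
      exact (csInf_le hbdd ⟨y, hy, rfl⟩).trans (hupper y hy)
    linarith
  · have h1 : F (x k) - sInf (φ k '' s) / A k ≤ A 1 / A k * C := by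
      have h := le_csInf hne hlow
      have h' := div_le_div_of_nonneg_right h hAk.le
      have e : (A k * F (x k) - A 1 * C) / A k = F (x k) - A 1 / A k * C := by
        field_simp
      linarith
    refine h1.trans ?_
    rcases hω0.eq_or_lt with h0 | hpos
    · have : C = 0 := by
        rw [hC, hdeg h0.symm, Real.zero_rpow (by positivity)]; simp
      simp [this]
    · refine mul_le_mul_of_nonneg_right ?_ hC0
      obtain ⟨m, rfl⟩ : ∃ m, k = m + 1 := ⟨k - 1, by omega⟩
      rw [hA 1 le_rfl, hA _ hk]
      have e1 : (1 + ω⁻¹) ^ 1 / (1 + ω⁻¹) ^ (m + 1) = (1 - 1 / (1 + ω)) ^ m := by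
        have e2 : 1 - 1 / (1 + ω) = (1 + ω⁻¹)⁻¹ := by field_simp; ring
        have : (1 + ω⁻¹) ≠ 0 := by positivity
        rw [e2, inv_pow, pow_one, pow_succ, div_mul_cancel_right₀ this]
      have e3 : Real.exp (-((((m + 1 : ℕ) : ℝ) - 1) / (1 + ω)))
          = Real.exp (-(1 / (1 + ω))) ^ m := by
        rw [← Real.exp_nat_mul]
        congr 1
        push_cast
        ring
      rw [e1, e3]
      refine pow_le_pow_left₀ ?_ ?_ m
      · exact sub_nonneg.2 ((div_le_one (by positivity)).2 (by linarith))
      · linarith [Real.add_one_le_exp (-(1 / (1 + ω)))]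
end
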